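/- arXiv:2109.08217 — 6 statements merged into one kernel-verified Lean document; each statement's English description precedes it below -/
import Mathlib

section
/- For every real number θ, ∫_0^θ log|2 sin t| dt = −(1/2) ∑_{n=1}^∞ sin(2nθ)/n^2. -/
open Real MeasureTheory

lemma aux_z (r t : ℝ) (n : ℕ) :
    (((r : ℂ) * Complex.exp (((2 * t : ℝ) : ℂ) * Complex.I)) ^ (n + 1) / ((n : ℂ) + 1)).re
      = r ^ (n + 1) * Real.cos (2 * (n + 1) * t) / ((n : ℝ) + 1) := by
  rw [mul_pow, ← Complex.exp_nat_mul]
  have h1 : ((n + 1 : ℕ) : ℂ) * (((2 * t : ℝ) : ℂ) * Complex.I)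
      = ((2 * (n + 1) * t : ℝ) : ℂ) * Complex.I := by push_cast; ring
  have h2 : ((n : ℂ) + 1) = (((n : ℝ) + 1 : ℝ) : ℂ) := by push_cast; rfl
  rw [h1, h2, Complex.div_ofReal_re, ← Complex.ofReal_pow, Complex.re_ofReal_mul,
    Complex.exp_ofReal_mul_I_re]

lemma aux_norm (r t : ℝ) :
    ‖1 - (r : ℂ) * Complex.exp (((2 * t : ℝ) : ℂ) * Complex.I)‖
      = √((1 - r) ^ 2 + 4 * r * Real.sin t ^ 2) := by
  rw [Complex.norm_def, Complex.normSq_apply]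
  congr 1
  simp only [Complex.sub_re, Complex.sub_im, Complex.one_re, Complex.one_im,
    Complex.re_ofReal_mul, Complex.im_ofReal_mul, Complex.exp_ofReal_mul_I_re,
    Complex.exp_ofReal_mul_I_im]
  rw [Real.sin_two_mul, Real.cos_two_mul]
  have := Real.sin_sq_add_cos_sq t
  have h : Real.sin t ^ 2 = 1 - Real.cos t ^ 2 := by linarith
  ring_nf
  rw [h]; ring

lemma aux_hasSum (r t : ℝ) (h0 : 0 ≤ r) (h1 : r < 1) :
    HasSum (fun n : ℕ => r ^ (n + 1) * Real.cos (2 * (n + 1) * t) / ((n : ℝ) + 1))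
      (-Real.log √((1 - r) ^ 2 + 4 * r * Real.sin t ^ 2)) := by
  have hz : ‖(r : ℂ) * Complex.exp (((2 * t : ℝ) : ℂ) * Complex.I)‖ < 1 := by
    rw [norm_mul, Complex.norm_exp_ofReal_mul_I, mul_one, Complex.norm_real, Real.norm_eq_abs,
      abs_of_nonneg h0]
    exact h1
  have h := Complex.hasSum_re (Complex.hasSum_taylorSeries_neg_log' hz)
  rw [Complex.neg_re, Complex.log_re, aux_norm] at h
  refine h.congr_fun ?_
  intro n
  exact (aux_z r t n).symm

lemma aux_int (r θ : ℝ) (h0 : 0 ≤ r) (h1 : r < 1) :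
    ∫ t in (0:ℝ)..θ, Real.log √((1 - r) ^ 2 + 4 * r * Real.sin t ^ 2)
      = -(1 / 2) * ∑' n : ℕ, r ^ (n + 1) * (Real.sin (2 * (n + 1) * θ) / ((n : ℝ) + 1) ^ 2) := by
  have h := intervalIntegral.hasSum_integral_of_dominated_convergence (μ := volume)
    (a := 0) (b := θ)
    (F := fun (n : ℕ) (t : ℝ) => r ^ (n + 1) * Real.cos (2 * (n + 1) * t) / ((n : ℝ) + 1))
    (f := fun t => -Real.log √((1 - r) ^ 2 + 4 * r * Real.sin t ^ 2))
    (fun n _ => r ^ n)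
    (fun n => by
      apply Continuous.aestronglyMeasurable
      fun_prop)
    (fun n => Filter.Eventually.of_forall fun t _ => by
      rw [Real.norm_eq_abs, abs_div, abs_mul, abs_of_nonneg (pow_nonneg h0 _),
        abs_of_pos (by positivity : (0:ℝ) < n + 1)]
      have hc := Real.abs_cos_le_one (2 * (n + 1) * t)
      have hp : r ^ (n + 1) ≤ r ^ n := pow_le_pow_of_le_one h0 h1.le (Nat.le_succ n)
      calc r ^ (n + 1) * |Real.cos (2 * (n + 1) * t)| / ((n : ℝ) + 1)
          ≤ r ^ (n + 1) * |Real.cos (2 * (n + 1) * t)| :=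
            div_le_self (by positivity) (by linarith [Nat.cast_nonneg (α := ℝ) n])
        _ ≤ r ^ (n + 1) * 1 := by gcongr
        _ ≤ r ^ n := by rw [mul_one]; exact hp)
    (Filter.Eventually.of_forall fun t _ => summable_geometric_of_lt_one h0 h1)
    (by simp)
    (Filter.Eventually.of_forall fun t _ => aux_hasSum r t h0 h1)
  rw [intervalIntegral.integral_neg] at h
  have h' := h.tsum_eq
  rw [← neg_eq_iff_eq_neg] at h'
  rw [← h', ← tsum_neg, ← tsum_mul_left]
  congr 1
  ext n
  have hn : (2 * ((n : ℝ) + 1)) ≠ 0 := by positivity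
  have e : ∫ t in (0:ℝ)..θ, Real.cos (2 * (n + 1) * t)
      = Real.sin (2 * (n + 1) * θ) / (2 * (n + 1)) := by
    rw [intervalIntegral.integral_comp_mul_left (fun x => Real.cos x) hn, integral_cos]
    simp [div_eq_inv_mul]
  rw [intervalIntegral.integral_div, intervalIntegral.integral_const_mul, e]
  field_simp

theorem aux_bound (r t : ℝ) (h0 : 1 / 4 < r) (h1 : r < 1) (hs : Real.sin t ≠ 0) :
    ‖Real.log √((1 - r) ^ 2 + 4 * r * Real.sin t ^ 2)‖
      ≤ Real.log 5 + ‖Real.log (Real.sin t)‖ := by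
  have hp : 0 < Real.sin t ^ 2 := by positivity
  have hle := Real.sin_sq_le_one t
  have hlow : |Real.sin t| ≤ √((1 - r) ^ 2 + 4 * r * Real.sin t ^ 2) := by
    apply Real.le_sqrt_of_sq_le
    rw [sq_abs]
    nlinarith [sq_nonneg (1 - r)]
  have hup : √((1 - r) ^ 2 + 4 * r * Real.sin t ^ 2) ≤ 5 := by
    rw [Real.sqrt_le_left (by norm_num)]
    nlinarith
  have hpos : 0 < |Real.sin t| := abs_pos.mpr hs
  have l1 := Real.log_le_log hpos hlow
  have l2 := Real.log_le_log (hpos.trans_le hlow) hup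
  rw [Real.log_abs] at l1
  have l3 : 0 ≤ Real.log 5 := Real.log_nonneg (by norm_num)
  rw [Real.norm_eq_abs, Real.norm_eq_abs, abs_le]
  constructor
  · linarith [neg_abs_le (Real.log (Real.sin t))]
  · linarith [abs_nonneg (Real.log (Real.sin t))]

/-- For every real `θ`, `∫_0^θ log|2 sin t| dt = −(1/2) ∑_{n=1}^∞ sin(2nθ)/n²`. -/
theorem integral_log_two_sin (θ : ℝ) :
    ∫ t in (0:ℝ)..θ, Real.log |2 * Real.sin t|
      = -(1 / 2) * ∑' n : ℕ, Real.sin (2 * (n + 1) * θ) / ((n : ℝ) + 1) ^ 2 := by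
  have hev : ∀ᶠ r : ℝ in nhdsWithin 1 (Set.Iio 1), 1 / 4 < r ∧ r < 1 := by
    filter_upwards [Ioo_mem_nhdsLT (show (1 / 4 : ℝ) < 1 by norm_num)] with r hr using hr
  have hae : ∀ᵐ t : ℝ, Real.sin t ≠ 0 := by
    have hc : (Set.range fun n : ℤ => (n : ℝ) * π).Countable := Set.countable_range _
    filter_upwards [hc.ae_notMem volume] with t ht h
    exact ht (Real.sin_eq_zero_iff.mp h)
  have hL : Filter.Tendsto
      (fun r : ℝ => ∫ t in (0:ℝ)..θ, Real.log √((1 - r) ^ 2 + 4 * r * Real.sin t ^ 2))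
      (nhdsWithin 1 (Set.Iio 1)) (nhds (∫ t in (0:ℝ)..θ, Real.log |2 * Real.sin t|)) := by
    apply intervalIntegral.tendsto_integral_filter_of_dominated_convergence
      (fun t => Real.log 5 + ‖Real.log (Real.sin t)‖)
    · refine Filter.Eventually.of_forall fun r => ?_
      apply Measurable.aestronglyMeasurable
      fun_prop
    · filter_upwards [hev] with r hr
      filter_upwards [hae] with t ht _
      exact aux_bound r t hr.1 hr.2 ht
    · exact (intervalIntegrable_const).add (intervalIntegrable_log_sin (a := 0) (b := θ)).norm
    · filter_upwards [hae] with t ht _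
      have e : |2 * Real.sin t| = √((1 - 1) ^ 2 + 4 * 1 * Real.sin t ^ 2) := by
        rw [← Real.sqrt_sq_eq_abs]; congr 1; ring
      rw [e]
      refine Filter.Tendsto.mono_left ?_ nhdsWithin_le_nhds
      have hc : ContinuousAt
          (fun r : ℝ => Real.log √((1 - r) ^ 2 + 4 * r * Real.sin t ^ 2)) 1 := by
        apply ContinuousAt.log
        · fun_prop
        · rw [← e]; simpa using ht
      exact hc
  have hR : Filter.Tendsto
      (fun r : ℝ => -(1 / 2) * ∑' n : ℕ,
        r ^ (n + 1) * (Real.sin (2 * (n + 1) * θ) / ((n : ℝ) + 1) ^ 2))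
      (nhdsWithin 1 (Set.Iio 1))
      (nhds (-(1 / 2) * ∑' n : ℕ, Real.sin (2 * (n + 1) * θ) / ((n : ℝ) + 1) ^ 2)) := by
    apply Filter.Tendsto.const_mul
    apply tendsto_tsum_of_dominated_convergence (bound := fun n : ℕ => 1 / ((n : ℝ) + 1) ^ 2)
    · have := (summable_nat_add_iff 1).mpr (Real.summable_one_div_nat_pow.mpr one_lt_two)
      simpa using this
    · intro n
      refine Filter.Tendsto.mono_left ?_ nhdsWithin_le_nhds
      have hc : ContinuousAt (fun r : ℝ =>
          r ^ (n + 1) * (Real.sin (2 * (n + 1) * θ) / ((n : ℝ) + 1) ^ 2)) 1 := by fun_prop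
      simpa [ContinuousAt] using hc
    · filter_upwards [hev] with r hr n
      have h0 : 0 ≤ r := by linarith [hr.1]
      rw [norm_mul, norm_div, Real.norm_eq_abs, Real.norm_eq_abs, Real.norm_eq_abs,
        abs_of_nonneg (pow_nonneg h0 _), abs_of_nonneg (by positivity : (0:ℝ) ≤ ((n:ℝ) + 1) ^ 2)]
      have hp : r ^ (n + 1) ≤ 1 := pow_le_one₀ h0 hr.2.le
      have hs := Real.abs_sin_le_one (2 * (n + 1) * θ)
      calc _ ≤ 1 * (|Real.sin (2 * (n + 1) * θ)| / ((n : ℝ) + 1) ^ 2) := by gcongr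
        _ ≤ _ := by rw [one_mul]; gcongr
  refine tendsto_nhds_unique (hL.congr' ?_) hR
  filter_upwards [hev] with r hr
  exact aux_int r θ (by linarith [hr.1]) hr.2
end

section
/- Let a, b, c be nonzero complex numbers with c·a = b^2 + 1. Then a/b + b/a + 1/(ab) = b/c + c/b + 1/(bc). In other words, K(x_1,x_2) = x_1/x_2 + x_2/x_1 + 1/(x_1 x_2) is a conserved quantity of the map (x_1, x_2) ↦ (x_2, (x_2^2+1)/x_1). -/
/-- `K(x₁,x₂) = x₁/x₂ + x₂/x₁ + 1/(x₁x₂)` is a conserved quantity of the map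
`(x₁, x₂) ↦ (x₂, (x₂²+1)/x₁)`: if `c·a = b² + 1` then
`a/b + b/a + 1/(ab) = b/c + c/b + 1/(bc)`. -/
theorem conserved_quantity_r2 (a b c : ℂ) (ha : a ≠ 0) (hb : b ≠ 0) (hc : c ≠ 0)
    (h : c * a = b ^ 2 + 1) :
    a / b + b / a + 1 / (a * b) = b / c + c / b + 1 / (b * c) := by
  have h1 : a / b + b / a + 1 / (a * b) = (a ^ 2 + (b ^ 2 + 1)) / (a * b) := by
    field_simp
    ring
  have h2 : b / c + c / b + 1 / (b * c) = (c ^ 2 + (b ^ 2 + 1)) / (b * c) := by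
    field_simp
    ring
  rw [h1, h2, ← h, div_eq_div_iff (mul_ne_zero ha hb) (mul_ne_zero hb hc)]
  ring
end

section
/- Let a, b, c be nonzero complex numbers with c·a = b^2 + 1, and set K = a/b + b/a + 1/(ab). Then c − K·b + a = 0. Consequently, any solution (x_n) with nonzero terms of the recurrence x_{n+2} x_n = x_{n+1}^2 + 1 satisfies the linear relation x_{n+2} − K x_{n+1} + x_n = 0, where K = x_1/x_2 + x_2/x_1 + 1/(x_1 x_2) is the conserved quantity. -/
theorem aux_K_left (a b c : ℂ) (ha : a ≠ 0) (hb : b ≠ 0) (h : c * a = b ^ 2 + 1) :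
    a / b + b / a + 1 / (a * b) = (a + c) / b := by
  field_simp
  linear_combination -h

theorem aux_K_right (a b c : ℂ) (hb : b ≠ 0) (hc : c ≠ 0) (h : c * a = b ^ 2 + 1) :
    b / c + c / b + 1 / (b * c) = (a + c) / b := by
  field_simp
  linear_combination -h

/-- If `c·a = b² + 1` and `K = a/b + b/a + 1/(ab)`, then `c − K·b + a = 0`.
Consequently, any solution with nonzero terms of the recurrence `x_{n+2} x_n = x_{n+1}² + 1`
satisfies the linear relation `x_{n+2} − K x_{n+1} + x_n = 0`, where `K` is the conserved
quantity evaluated at the initial data. -/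
theorem linearisation_r2 (a b c : ℂ) (ha : a ≠ 0) (hb : b ≠ 0) (hc : c ≠ 0)
    (h : c * a = b ^ 2 + 1) :
    (c - (a / b + b / a + 1 / (a * b)) * b + a = 0) ∧
      ∀ x : ℕ → ℂ, (∀ n, x n ≠ 0) → (∀ n, x (n + 2) * x n = x (n + 1) ^ 2 + 1) →
        ∀ n, x (n + 2) - (x 1 / x 2 + x 2 / x 1 + 1 / (x 1 * x 2)) * x (n + 1) + x n = 0 := by
  have key : ∀ a b c : ℂ, a ≠ 0 → b ≠ 0 → c * a = b ^ 2 + 1 →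
      c - (a / b + b / a + 1 / (a * b)) * b + a = 0 := by
    intro a b c ha hb h
    rw [aux_K_left a b c ha hb h, div_mul_cancel₀ _ hb]
    ring
  refine ⟨key a b c ha hb h, fun x hx hr n => ?_⟩
  have step : ∀ n, x (n + 1) / x (n + 2) + x (n + 2) / x (n + 1) + 1 / (x (n + 1) * x (n + 2))
      = x n / x (n + 1) + x (n + 1) / x n + 1 / (x n * x (n + 1)) := fun n => by
    rw [aux_K_left _ _ _ (hx n) (hx (n + 1)) (hr n),
      aux_K_right _ _ _ (hx (n + 1)) (hx (n + 2)) (hr n)]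
  have inv : ∀ n, x n / x (n + 1) + x (n + 1) / x n + 1 / (x n * x (n + 1))
      = x 0 / x 1 + x 1 / x 0 + 1 / (x 0 * x 1) := by
    intro n
    induction n with
    | zero => rfl
    | succ k ih => exact (step k).trans ih
  have h1 : x 1 / x 2 + x 2 / x 1 + 1 / (x 1 * x 2)
      = x 0 / x 1 + x 1 / x 0 + 1 / (x 0 * x 1) := inv 1
  rw [h1, ← inv n]
  exact key _ _ _ (hx n) (hx (n + 1)) (hr n)
end

section
/- Let (x_n) be a sequence of nonzero complex numbers satisfying the Somos-4 recurrence x_{n+4} x_n = x_{n+3} x_{n+1} + x_{n+2}^2 for all n, and define y_n = x_{n+2} x_n / x_{n+1}^2. Then y_{n+2} = (y_{n+1} + 1)/(y_n y_{n+1}^2) for all n. -/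
/-- For a sequence of nonzero complex numbers satisfying the Somos-4 recurrence
`x_{n+4} x_n = x_{n+3} x_{n+1} + x_{n+2}²`, the variables `y_n = x_{n+2} x_n / x_{n+1}²`
satisfy the QRT map `y_{n+2} = (y_{n+1} + 1)/(y_n y_{n+1}²)`. -/
theorem somos4_qrt_reduction (x : ℕ → ℂ) (hx : ∀ n, x n ≠ 0)
    (hrec : ∀ n, x (n + 4) * x n = x (n + 3) * x (n + 1) + x (n + 2) ^ 2)
    (y : ℕ → ℂ) (hy : ∀ n, y n = x (n + 2) * x n / x (n + 1) ^ 2) :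
    ∀ n, y (n + 2) = (y (n + 1) + 1) / (y n * y (n + 1) ^ 2) := by
  intro n
  have h0 := hx n
  have h1 := hx (n + 1)
  have h2 := hx (n + 2)
  have h3 := hx (n + 3)
  have hr := hrec n
  have e0 : y n = x (n + 2) * x n / x (n + 1) ^ 2 := hy n
  have e1 : y (n + 1) = x (n + 3) * x (n + 1) / x (n + 2) ^ 2 := hy (n + 1)
  have e2 : y (n + 2) = x (n + 4) * x (n + 2) / x (n + 3) ^ 2 := hy (n + 2)
  have n0 : y n ≠ 0 := by
    rw [e0]; exact div_ne_zero (mul_ne_zero h2 h0) (pow_ne_zero 2 h1)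
  have n1 : y (n + 1) ≠ 0 := by
    rw [e1]; exact div_ne_zero (mul_ne_zero h3 h1) (pow_ne_zero 2 h2)
  rw [eq_div_iff (mul_ne_zero n0 (pow_ne_zero 2 n1))]
  have a : y (n + 2) * (y n * y (n + 1) ^ 2) = x (n + 4) * x n / x (n + 2) ^ 2 := by
    rw [e0, e1, e2]; field_simp
  rw [a, hr, e1, add_div, div_self (pow_ne_zero 2 h2)]
end

section
/- Let a be a complex parameter and let (x_n) be a sequence of nonzero complex numbers satisfying x_{n+5} x_{n+2}^3 x_{n+1}^2 = x_{n+4}^3 x_{n+1}^3 − x_{n+4}^2 x_{n+3}^3 x_n + a x_{n+3}^6 x_{n+2}^6 for all n. Define u_n = x_{n+3} x_n / (x_{n+1} x_{n+2})^2, and assume u_{n+1} ≠ 0. Then u_{n+2} + u_n = u_{n+1} + a/u_{n+1}^2, i.e. (u_n) satisfies the Hietarinta–Viallet recurrence. -/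
/-- Laurentification of the Hietarinta–Viallet map: if a sequence of nonzero complex numbers
satisfies `x_{n+5} x_{n+2}³ x_{n+1}² = x_{n+4}³ x_{n+1}³ − x_{n+4}² x_{n+3}³ x_n + a x_{n+3}⁶ x_{n+2}⁶`,
then `u_n = x_{n+3} x_n / (x_{n+1} x_{n+2})²` satisfies `u_{n+2} + u_n = u_{n+1} + a/u_{n+1}²`. -/
theorem hietarinta_viallet_laurentification (a : ℂ) (x : ℕ → ℂ) (hx : ∀ n, x n ≠ 0)
    (hrec : ∀ n, x (n + 5) * x (n + 2) ^ 3 * x (n + 1) ^ 2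
      = x (n + 4) ^ 3 * x (n + 1) ^ 3 - x (n + 4) ^ 2 * x (n + 3) ^ 3 * x n
        + a * x (n + 3) ^ 6 * x (n + 2) ^ 6)
    (u : ℕ → ℂ) (hu : ∀ n, u n = x (n + 3) * x n / (x (n + 1) * x (n + 2)) ^ 2)
    (hune : ∀ n, u (n + 1) ≠ 0) :
    ∀ n, u (n + 2) + u n = u (n + 1) + a / u (n + 1) ^ 2 := by
  intro n
  have h := hrec n
  have h0 := hu n
  have h1 : u (n + 1) = x (n + 4) * x (n + 1) / (x (n + 2) * x (n + 3)) ^ 2 := hu (n + 1)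
  have h2 : u (n + 2) = x (n + 5) * x (n + 2) / (x (n + 3) * x (n + 4)) ^ 2 := hu (n + 2)
  have e1 := hx (n + 1)
  have e2 := hx (n + 2)
  have e3 := hx (n + 3)
  have e4 := hx (n + 4)
  rw [h0, h1, h2]
  generalize x n = p0 at *
  generalize x (n + 1) = p1 at *
  generalize x (n + 2) = p2 at *
  generalize x (n + 3) = p3 at *
  generalize x (n + 4) = p4 at *
  generalize x (n + 5) = p5 at *
  have key : p5 * p2 / (p3 * p4) ^ 2 + p3 * p0 / (p1 * p2) ^ 2
      - (p4 * p1 / (p2 * p3) ^ 2 + a / (p4 * p1 / (p2 * p3) ^ 2) ^ 2)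
      = (p5 * p2 ^ 3 * p1 ^ 2 - (p4 ^ 3 * p1 ^ 3 - p4 ^ 2 * p3 ^ 3 * p0 + a * p3 ^ 6 * p2 ^ 6))
        / (p1 * p2 * p3 * p4) ^ 2 := by
    field_simp
    ring
  rw [h, sub_self, zero_div] at key
  exact sub_eq_zero.mp key
end

section
/- Fix an integer r ≥ 3 and define a real sequence by d_1 = −1, d_2 = 0, and d_{n+2} = max(r·d_{n+1}, 0) − d_n for n ≥ 1. Then d_n > 0 for all n ≥ 3, the sequence satisfies the linear recurrence d_{n+2} = r·d_{n+1} − d_n for all n ≥ 2, and d_n / λ^n converges as n → ∞ to a positive limit, where λ = (r + √(r^2 − 4))/2. -/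
open Filter

/-- The tropical d-vector dynamics of the rank-2 cluster recurrence `x_{n+2} x_n = x_{n+1}^r + 1`
for `r ≥ 3`: with `d₁ = −1`, `d₂ = 0` and `d_{n+2} = max(r d_{n+1}, 0) − d_n` for `n ≥ 1`,
one has `d_n > 0` for `n ≥ 3`, the linear recurrence `d_{n+2} = r d_{n+1} − d_n` holds for
`n ≥ 2`, and `d_n / λⁿ` converges to a positive limit, where `λ = (r + √(r²−4))/2`. -/
theorem dvector_growth (r : ℕ) (hr : 3 ≤ r) (d : ℕ → ℝ)
    (h1 : d 1 = -1) (h2 : d 2 = 0)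
    (hrec : ∀ n, 1 ≤ n → d (n + 2) = max ((r : ℝ) * d (n + 1)) 0 - d n) :
    (∀ n, 3 ≤ n → 0 < d n) ∧
      (∀ n, 2 ≤ n → d (n + 2) = (r : ℝ) * d (n + 1) - d n) ∧
      ∃ L : ℝ, 0 < L ∧
        Tendsto (fun n : ℕ => d n / (((r : ℝ) + Real.sqrt ((r : ℝ) ^ 2 - 4)) / 2) ^ n)
          atTop (nhds L) := by
  have hr' : (3 : ℝ) ≤ r := by exact_mod_cast hr
  have h3 : d 3 = 1 := by
    have := hrec 1 le_rfl
    norm_num [h1, h2] at this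
    exact this
  have key : ∀ k : ℕ, 0 ≤ d (k + 2) ∧ 0 < d (k + 3) ∧ d (k + 2) ≤ d (k + 3) := by
    intro k
    induction k with
    | zero => norm_num [h2, h3]
    | succ k ih =>
      obtain ⟨ha, hb, hc⟩ := ih
      have h := hrec (k + 2) (by omega)
      have e : d (k + 1 + 3) = max ((r : ℝ) * d (k + 3)) 0 - d (k + 2) := h
      rw [max_eq_left (by positivity)] at e
      have e2 : d (k + 1 + 2) = d (k + 3) := rfl
      rw [e, e2]
      have : 3 * d (k + 3) ≤ r * d (k + 3) := by gcongr
      refine ⟨hb.le, ?_, ?_⟩ <;> linarith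
  have lin : ∀ n, 2 ≤ n → d (n + 2) = (r : ℝ) * d (n + 1) - d n := by
    intro n hn
    obtain ⟨k, rfl⟩ := Nat.exists_eq_add_of_le' hn
    have hb : 0 < d (k + 2 + 1) := (key k).2.1
    rw [hrec (k + 2) (by omega), max_eq_left (by positivity)]
  refine ⟨?_, lin, ?_⟩
  · intro n hn
    obtain ⟨k, rfl⟩ := Nat.exists_eq_add_of_le' hn
    exact (key k).2.1
  set s := Real.sqrt ((r : ℝ) ^ 2 - 4) with hs
  have hs2 : s ^ 2 = (r : ℝ) ^ 2 - 4 := Real.sq_sqrt (by nlinarith)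
  have hspos : 0 < s := Real.sqrt_pos.mpr (by nlinarith)
  set l := ((r : ℝ) + s) / 2 with hl
  set m := ((r : ℝ) - s) / 2 with hm
  have hlpos : 0 < l := by positivity
  have hlm : l * m = 1 := by rw [hl, hm]; nlinarith
  have hmpos : 0 < m := by
    by_contra h
    nlinarith [not_lt.mp h]
  have hml : m < l := by rw [hl, hm]; linarith
  have hl2 : l ^ 2 = r * l - 1 := by rw [hl]; nlinarith
  have hm2 : m ^ 2 = r * m - 1 := by rw [hm]; nlinarith
  have closed : ∀ k : ℕ, s * d (k + 2) = l ^ k - m ^ k ∧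
      s * d (k + 3) = l ^ (k + 1) - m ^ (k + 1) := by
    intro k
    induction k with
    | zero =>
      refine ⟨by simp [h2], ?_⟩
      norm_num [h3]
      rw [hl, hm]; ring
    | succ k ih =>
      refine ⟨ih.2, ?_⟩
      have e : d (k + 1 + 3) = (r : ℝ) * d (k + 3) - d (k + 2) := lin (k + 2) (by omega)
      rw [e]
      have e1 : l ^ (k + 1 + 1) = l ^ k * l ^ 2 := by ring
      have e2 : m ^ (k + 1 + 1) = m ^ k * m ^ 2 := by ring
      rw [e1, e2, hl2, hm2]
      linear_combination (r : ℝ) * ih.2 - ih.1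
  refine ⟨1 / (s * l ^ 2), by positivity, ?_⟩
  rw [← tendsto_add_atTop_iff_nat 2]
  have hq : Tendsto (fun k : ℕ => (m / l) ^ k) atTop (nhds 0) :=
    tendsto_pow_atTop_nhds_zero_of_lt_one (by positivity) ((div_lt_one hlpos).mpr hml)
  have hlim : Tendsto (fun k : ℕ => (1 - (m / l) ^ k) / (s * l ^ 2)) atTop
      (nhds (1 / (s * l ^ 2))) := by
    have h := (hq.const_sub 1).div_const (s * l ^ 2)
    rwa [sub_zero] at h
  refine hlim.congr fun k => ?_
  have hd : d (k + 2) = (l ^ k - m ^ k) / s := by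
    rw [eq_div_iff hspos.ne', ← (closed k).1]; ring
  rw [hd, div_pow, pow_add]
  have := hlpos.ne'
  have := hspos.ne'
  clear_value l m s
  field_simp
end
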